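/- Weighted total variation distance between two Gaussians: let μ₁ = N(m₁, Σ₁) and μ₂ = N(m₂, Σ₂) on R^n with Σ₁, Σ₂ symmetric positive definite. Then d_g(μ₁, μ₂) ≤ √(μ₁[g²] + μ₂[g²]) · (3‖Σ₂^{−1}Σ₁ − I_n‖_F + |m₁ − m₂|_{Σ₂}), where ‖·‖_F is the Frobenius norm and |x|_{Σ₂} = |Σ₂^{−1/2} x|. -/

import Mathlib

open MeasureTheory Matrix
open scoped BigOperators ENNReal

noncomputable section

namespace EnKF

/-- Points of `ℝ^n`, with Lebesgue measure as `volume`. -/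
abbrev Vec (n : ℕ) := Fin n → ℝ

/-- Euclidean norm of a finitely indexed real vector. -/
def enorm {ι : Type*} [Fintype ι] (v : ι → ℝ) : ℝ := Real.sqrt (∑ i, v i ^ 2)

/-- The weight function `g(v) = 1 + |v|²` on `ℝ^n`. -/
def gw {n : ℕ} (v : Vec n) : ℝ := 1 + ∑ i, v i ^ 2

/-- The weight function `g(u, y) = 1 + |u|² + |y|²` on `ℝ^d × ℝ^K`. -/
def gw2 {d K : ℕ} (p : Vec d × Vec K) : ℝ := 1 + (∑ i, p.1 i ^ 2) + (∑ j, p.2 j ^ 2)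

/-- Weighted total-variation metric with weight `G`:
`d_G(μ₁, μ₂) = sup { |μ₁[f] − μ₂[f]| : f measurable, |f| ≤ G pointwise }`. -/
def dG {E : Type*} [MeasurableSpace E] (G : E → ℝ) (μ₁ μ₂ : Measure E) : ℝ :=
  ⨆ f : {f : E → ℝ // Measurable f ∧ ∀ v, |f v| ≤ G v},
    |(∫ v, f.1 v ∂μ₁) - ∫ v, f.1 v ∂μ₂|

/-- Loewner order on symmetric matrices: `loe A B ↔ A ≼ B`. -/
def loe {ι : Type*} [Fintype ι] (A B : Matrix ι ι ℝ) : Prop := (B - A).PosSemidef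

/-- Mean vector of a measure on `ℝ^n`. -/
def mean {n : ℕ} (μ : Measure (Vec n)) : Vec n := fun i => ∫ v, v i ∂μ

/-- Covariance matrix of a measure on `ℝ^n`. -/
def cov {n : ℕ} (μ : Measure (Vec n)) : Matrix (Fin n) (Fin n) ℝ :=
  Matrix.of fun i j => ∫ v, (v i - mean μ i) * (v j - mean μ j) ∂μ

/-- Density of the Gaussian `N(m, S)` on `ℝ^n`. -/
def gaussDensity {n : ℕ} (m : Vec n) (S : Matrix (Fin n) (Fin n) ℝ) (x : Vec n) : ℝ :=
  (Real.sqrt ((2 * Real.pi) ^ n * S.det))⁻¹ *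
    Real.exp (-(1 / 2) * ((x - m) ⬝ᵥ (S⁻¹ *ᵥ (x - m))))

/-- The (nondegenerate) Gaussian measure `N(m, S)` on `ℝ^n`. -/
def gauss {n : ℕ} (m : Vec n) (S : Matrix (Fin n) (Fin n) ℝ) : Measure (Vec n) :=
  volume.withDensity fun x => ENNReal.ofReal (gaussDensity m S x)

/-- Gaussian projection `G` on `ℝ^n`: the Gaussian with the same mean and covariance. -/
def Gproj {n : ℕ} (μ : Measure (Vec n)) : Measure (Vec n) := gauss (mean μ) (cov μ)

variable {d K : ℕ}

/-- Mean of the first (state) marginal of a measure on `ℝ^d × ℝ^K`. -/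
def meanU (π : Measure (Vec d × Vec K)) : Vec d := fun i => ∫ p, p.1 i ∂π

/-- Mean of the second (data) marginal of a measure on `ℝ^d × ℝ^K`. -/
def meanY (π : Measure (Vec d × Vec K)) : Vec K := fun j => ∫ p, p.2 j ∂π

/-- Block `C^{uu}` of the covariance of a measure on `ℝ^d × ℝ^K`. -/
def covUU (π : Measure (Vec d × Vec K)) : Matrix (Fin d) (Fin d) ℝ :=
  Matrix.of fun i j => ∫ p, (p.1 i - meanU π i) * (p.1 j - meanU π j) ∂π

/-- Block `C^{uy}` of the covariance of a measure on `ℝ^d × ℝ^K`. -/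
def covUY (π : Measure (Vec d × Vec K)) : Matrix (Fin d) (Fin K) ℝ :=
  Matrix.of fun i j => ∫ p, (p.1 i - meanU π i) * (p.2 j - meanY π j) ∂π

/-- Block `C^{yy}` of the covariance of a measure on `ℝ^d × ℝ^K`. -/
def covYY (π : Measure (Vec d × Vec K)) : Matrix (Fin K) (Fin K) ℝ :=
  Matrix.of fun i j => ∫ p, (p.2 i - meanY π i) * (p.2 j - meanY π j) ∂π

/-- Full covariance matrix of a measure on `ℝ^d × ℝ^K`, in block form. -/
def covBlock (π : Measure (Vec d × Vec K)) : Matrix (Fin d ⊕ Fin K) (Fin d ⊕ Fin K) ℝ :=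
  Matrix.fromBlocks (covUU π) (covUY π) (covUY π)ᵀ (covYY π)

/-- Density of a Gaussian on `ℝ^d × ℝ^K` with mean `(mu, my)` and covariance `S`. -/
def jointGaussDensity (mu : Vec d) (my : Vec K)
    (S : Matrix (Fin d ⊕ Fin K) (Fin d ⊕ Fin K) ℝ) (p : Vec d × Vec K) : ℝ :=
  (Real.sqrt ((2 * Real.pi) ^ (d + K) * S.det))⁻¹ *
    Real.exp (-(1 / 2) *
      (Sum.elim (p.1 - mu) (p.2 - my) ⬝ᵥ (S⁻¹ *ᵥ Sum.elim (p.1 - mu) (p.2 - my))))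

/-- Gaussian measure on `ℝ^d × ℝ^K` with mean `(mu, my)` and covariance `S`. -/
def jointGauss (mu : Vec d) (my : Vec K)
    (S : Matrix (Fin d ⊕ Fin K) (Fin d ⊕ Fin K) ℝ) : Measure (Vec d × Vec K) :=
  volume.withDensity fun p => ENNReal.ofReal (jointGaussDensity mu my S p)

/-- Density of the Gaussian projection of a measure on `ℝ^d × ℝ^K`. -/
def gProjDensity2 (π : Measure (Vec d × Vec K)) : Vec d × Vec K → ℝ :=
  jointGaussDensity (meanU π) (meanY π) (covBlock π)

/-- Gaussian projection on `ℝ^d × ℝ^K`. -/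
def Gproj2 (π : Measure (Vec d × Vec K)) : Measure (Vec d × Vec K) :=
  jointGauss (meanU π) (meanY π) (covBlock π)

/-- Prediction operator `P`: the law of `Ψ(V) + ξ`, `V ∼ μ` independent of `ξ ∼ N(0, Σ)`. -/
def Pop (Psi : Vec d → Vec d) (Sig : Matrix (Fin d) (Fin d) ℝ)
    (μ : Measure (Vec d)) : Measure (Vec d) :=
  (μ.prod (gauss 0 Sig)).map fun p => Psi p.1 + p.2

/-- Lifting operator `Q`: the law of `(U, H(U) + η)`, `U ∼ μ` independent of `η ∼ N(0, Γ)`. -/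
def Qop (H : Vec d → Vec K) (Gam : Matrix (Fin K) (Fin K) ℝ)
    (μ : Measure (Vec d)) : Measure (Vec d × Vec K) :=
  (μ.prod (gauss 0 Gam)).map fun p => (p.1, H p.1 + p.2)

/-- Lebesgue density of `Pμ`. -/
def predDensity (Psi : Vec d → Vec d) (Sig : Matrix (Fin d) (Fin d) ℝ)
    (μ : Measure (Vec d)) (u : Vec d) : ℝ :=
  (Real.sqrt ((2 * Real.pi) ^ d * Sig.det))⁻¹ *
    ∫ v, Real.exp (-(1 / 2) * ((u - Psi v) ⬝ᵥ (Sig⁻¹ *ᵥ (u - Psi v)))) ∂μ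

/-- Lebesgue density of `QPμ` on `ℝ^d × ℝ^K`. -/
def qpDensity (Psi : Vec d → Vec d) (Sig : Matrix (Fin d) (Fin d) ℝ)
    (H : Vec d → Vec K) (Gam : Matrix (Fin K) (Fin K) ℝ)
    (μ : Measure (Vec d)) (p : Vec d × Vec K) : ℝ :=
  predDensity Psi Sig μ p.1 * gaussDensity (H p.1) Gam p.2

/-- Conditioning operator `B` applied to a (joint) density `f` and a datum `y†`:
the measure on `ℝ^d` with density `u ↦ f(u, y†) / ∫ f(U, y†) dU`. -/
def condM (f : Vec d × Vec K → ℝ) (ydag : Vec K) : Measure (Vec d) :=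
  volume.withDensity fun u => ENNReal.ofReal (f (u, ydag) / ∫ U, f (U, ydag))

/-- Kalman transport operator `T`: the pushforward of `π` under
`(u, y) ↦ u + C^{uy}(π) C^{yy}(π)⁻¹ (y† − y)`. -/
def Top (ydag : Vec K) (π : Measure (Vec d × Vec K)) : Measure (Vec d) :=
  π.map fun p => p.1 + covUY π *ᵥ ((covYY π)⁻¹ *ᵥ (ydag - p.2))

/-- Operator (spectral) norm of a real matrix. -/
def opNorm {ι : Type*} [Fintype ι] {κ : Type*} [Fintype κ] (A : Matrix ι κ ℝ) : ℝ :=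
  ⨆ x : {x : κ → ℝ // ∑ i, x i ^ 2 ≤ 1}, enorm (A *ᵥ x.1)

/-- Frobenius norm of a real matrix. -/
def frobNorm {ι κ : Type*} [Fintype ι] [Fintype κ] (A : Matrix ι κ ℝ) : ℝ :=
  Real.sqrt (∑ i, ∑ j, A i j ^ 2)

/-- Weighted norm `|x|_S = |S^{-1/2} x|`, i.e. `√(xᵀ S⁻¹ x)`. -/
def wnorm {n : ℕ} (S : Matrix (Fin n) (Fin n) ℝ) (x : Vec n) : ℝ :=
  Real.sqrt (x ⬝ᵥ (S⁻¹ *ᵥ x))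

/-- The set `𝒫_R(ℝ^n)` of probability measures with `|M(μ)| ≤ R` and
`R⁻² I ≼ C(μ) ≼ R² I`. -/
def PR (n : ℕ) (R : ℝ) : Set (Measure (Vec n)) :=
  {μ | IsProbabilityMeasure μ ∧ enorm (mean μ) ≤ R ∧
    loe ((R ^ 2)⁻¹ • 1) (cov μ) ∧ loe (cov μ) (R ^ 2 • 1)}

/-- The set `𝒫_R(ℝ^d × ℝ^K)`. -/
def PR2 (d K : ℕ) (R : ℝ) : Set (Measure (Vec d × Vec K)) :=
  {π | IsProbabilityMeasure π ∧ enorm (Sum.elim (meanU π) (meanY π)) ≤ R ∧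
    loe ((R ^ 2)⁻¹ • 1) (covBlock π) ∧ loe (covBlock π) (R ^ 2 • 1)}

/-- Smallest eigenvalue of a symmetric matrix (Rayleigh quotient form). -/
def lambdaMin {ι : Type*} [Fintype ι] (A : Matrix ι ι ℝ) : ℝ :=
  ⨅ x : {x : ι → ℝ // ∑ i, x i ^ 2 = 1}, x.1 ⬝ᵥ (A *ᵥ x.1)

/-- Kullback–Leibler divergence `KL(μ₁ ‖ μ₂) = ∫ (dμ₁/dμ₂) log (dμ₁/dμ₂) dμ₂`. -/
def kl {E : Type*} [MeasurableSpace E] (μ₁ μ₂ : Measure E) : ℝ :=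
  ∫ v, ((μ₁.rnDeriv μ₂ v).toReal * Real.log (μ₁.rnDeriv μ₂ v).toReal) ∂μ₂

/-!
With densities `p`, `q` of `μ₁`, `μ₂`, the Cauchy–Schwarz inequality applied to
`f (p - q) = f (√p + √q) · (√p - √q)` bounds `d_G(μ₁, μ₂)` by
`√(μ₁[G²] + μ₂[G²]) · √(2 H²)`, where `H² = ∫ (√p - √q)²`. So it is enough to show
`2 H² ≤ (3 F + w)²`, with `F = ‖Σ₂⁻¹ Σ₁ - I‖_F` and `w = |m₁ - m₂|_{Σ₂}`.

Since `H² ≤ 2`, this is clear when `3 F + w ≥ 2`. Otherwise `F ≤ 2 / 3`, and `H²` is at most the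
relative entropy of the two Gaussians,
`(tr (Σ₂⁻¹ Σ₁) - n - log det (Σ₂⁻¹ Σ₁) + w²) / 2`. The matrix `Σ₂⁻¹ Σ₁` is similar to a positive
definite one, and its eigenvalues `λ` satisfy `∑ (λ - 1)² ≤ F²`, hence `λ ≥ 1 - F`. Summing
`λ - 1 - log λ ≤ (λ - 1)² / λ` gives `2 H² ≤ F² / (1 - F) + w² ≤ 3 F² + w²`.
-/

open ProbabilityTheory

section WeightedTotalVariation

variable {α : Type*} [MeasurableSpace α] {μ μ₁ μ₂ ν : Measure α} {p q f g : α → ℝ}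

lemma abs_integral_mul_le_sqrt_mul_sqrt (hf : MemLp f 2 ν) (hg : MemLp g 2 ν) :
    |∫ x, f x * g x ∂ν| ≤ √(∫ x, f x ^ 2 ∂ν) * √(∫ x, g x ^ 2 ∂ν) := by
  have holder := integral_mul_norm_le_Lp_mul_Lq (μ := ν) (f := f) (g := g)
    Real.HolderConjugate.two_two (by simpa using hf) (by simpa using hg)
  calc |∫ x, f x * g x ∂ν| ≤ ∫ x, ‖f x‖ * ‖g x‖ ∂ν := by
        simpa only [norm_mul, Real.norm_eq_abs] using
          norm_integral_le_integral_norm (μ := ν) fun x => f x * g x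
    _ ≤ √(∫ x, f x ^ 2 ∂ν) * √(∫ x, g x ^ 2 ∂ν) := by
        simpa [Real.sqrt_eq_rpow] using holder

/-- `p` is a real-valued density of `μ` with respect to `ν`. Nonnegativity is required pointwise,
so that `ENNReal.ofReal` loses no information. -/
structure IsRealDensity (μ ν : Measure α) (p : α → ℝ) : Prop where
  measurable : Measurable p
  nonneg : ∀ x, 0 ≤ p x
  eq_withDensity : μ = ν.withDensity fun x => ENNReal.ofReal (p x)

namespace IsRealDensity

lemma integral_eq (h : IsRealDensity μ ν p) (f : α → ℝ) :
    ∫ x, f x ∂μ = ∫ x, p x * f x ∂ν := by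
  rw [h.eq_withDensity, integral_withDensity_eq_integral_toReal_smul h.measurable.ennreal_ofReal
    (by simp)]
  simp [ENNReal.toReal_ofReal (h.nonneg _)]

lemma integrable_iff (h : IsRealDensity μ ν p) :
    Integrable f μ ↔ Integrable (fun x => p x * f x) ν := by
  rw [h.eq_withDensity, integrable_withDensity_iff_integrable_smul' h.measurable.ennreal_ofReal
    (by simp)]
  simp [ENNReal.toReal_ofReal (h.nonneg _)]

lemma integrable [IsFiniteMeasure μ] (h : IsRealDensity μ ν p) : Integrable p ν := by
  simpa using h.integrable_iff.1 (integrable_const (1 : ℝ))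

lemma integral_eq_measureReal_univ (h : IsRealDensity μ ν p) : ∫ x, p x ∂ν = μ.real Set.univ := by
  simpa using (h.integral_eq fun _ => 1).symm

lemma memLp_two_mul_sqrt (h : IsRealDensity μ ν p) (hf : MemLp f 2 μ) :
    MemLp (fun x => f x * √(p x)) 2 ν := by
  have hmeas : AEStronglyMeasurable (fun x => f x * √(p x)) ν := by
    have hfμ := hf.aestronglyMeasurable
    rw [h.eq_withDensity] at hfμ
    have hpf := (aestronglyMeasurable_withDensity_iff h.measurable.real_toNNReal).1 hfμ
    refine (hpf.mul h.measurable.sqrt.inv.aestronglyMeasurable).congr (.of_forall fun x => ?_)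
    simp only [Pi.mul_apply, Pi.inv_apply, Real.coe_toNNReal _ (h.nonneg x), smul_eq_mul]
    rw [mul_right_comm, ← div_eq_mul_inv, Real.div_sqrt, mul_comm]
  refine (memLp_two_iff_integrable_sq hmeas).2 ?_
  simpa only [mul_pow, Real.sq_sqrt (h.nonneg _), mul_comm] using
    h.integrable_iff.1 hf.integrable_sq

lemma memLp_two_sqrt [IsFiniteMeasure μ] (h : IsRealDensity μ ν p) :
    MemLp (fun x => √(p x)) 2 ν := by
  simpa using h.memLp_two_mul_sqrt (memLp_const 1)

end IsRealDensity

/-- The squared Hellinger distance (without the factor `1 / 2`) between the measures with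
densities `p` and `q` with respect to `ν`, in terms of the densities. -/
def sqHellinger (ν : Measure α) (p q : α → ℝ) : ℝ := ∫ x, (√(p x) - √(q x)) ^ 2 ∂ν

/-- The relative entropy (Kullback–Leibler divergence) of the measure with density `p` from the
measure with density `q` with respect to `ν`, in terms of the densities. -/
def relEntropy (ν : Measure α) (p q : α → ℝ) : ℝ :=
  ∫ x, p x * (Real.log (p x) - Real.log (q x)) ∂ν

lemma abs_integral_sub_integral_le [IsFiniteMeasure μ₁] [IsFiniteMeasure μ₂]
    (h₁ : IsRealDensity μ₁ ν p) (h₂ : IsRealDensity μ₂ ν q)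
    (hf₁ : MemLp f 2 μ₁) (hf₂ : MemLp f 2 μ₂) :
    |(∫ x, f x ∂μ₁) - ∫ x, f x ∂μ₂| ≤
      √((∫ x, f x ^ 2 ∂μ₁) + ∫ x, f x ^ 2 ∂μ₂) * √(2 * sqHellinger ν p q) := by
  have hfp := h₁.memLp_two_mul_sqrt hf₁
  have hfq := h₂.memLp_two_mul_sqrt hf₂
  have hsub := h₁.memLp_two_sqrt.sub h₂.memLp_two_sqrt
  have factorization : (∫ x, f x ∂μ₁) - ∫ x, f x ∂μ₂ =
      ∫ x, (f x * √(p x) + f x * √(q x)) * (√(p x) - √(q x)) ∂ν := by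
    rw [h₁.integral_eq, h₂.integral_eq, ← integral_sub
      (h₁.integrable_iff.1 (hf₁.integrable one_le_two))
      (h₂.integrable_iff.1 (hf₂.integrable one_le_two))]
    refine integral_congr_ae (.of_forall fun x => ?_)
    linear_combination (-f x) * Real.sq_sqrt (h₁.nonneg x) + f x * Real.sq_sqrt (h₂.nonneg x)
  have hsum : ∫ x, (f x * √(p x) + f x * √(q x)) ^ 2 ∂ν ≤
      2 * ((∫ x, f x ^ 2 ∂μ₁) + ∫ x, f x ^ 2 ∂μ₂) := by
    have hp := h₁.integrable_iff.1 hf₁.integrable_sq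
    have hq := h₂.integrable_iff.1 hf₂.integrable_sq
    rw [h₁.integral_eq, h₂.integral_eq, ← integral_add hp hq, ← integral_const_mul]
    refine integral_mono (hfp.add hfq).integrable_sq ((hp.add hq).const_mul 2) fun x => ?_
    simpa only [mul_pow, Real.sq_sqrt (h₁.nonneg x), Real.sq_sqrt (h₂.nonneg x),
      mul_comm (f x ^ 2)] using add_sq_le (a := f x * √(p x)) (b := f x * √(q x))
  calc |(∫ x, f x ∂μ₁) - ∫ x, f x ∂μ₂|
      ≤ √(∫ x, (f x * √(p x) + f x * √(q x)) ^ 2 ∂ν) * √(sqHellinger ν p q) := by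
        rw [factorization]
        exact abs_integral_mul_le_sqrt_mul_sqrt (hfp.add hfq) hsub
    _ ≤ √(2 * ((∫ x, f x ^ 2 ∂μ₁) + ∫ x, f x ^ 2 ∂μ₂)) * √(sqHellinger ν p q) := by gcongr
    _ = √((∫ x, f x ^ 2 ∂μ₁) + ∫ x, f x ^ 2 ∂μ₂) * √(2 * sqHellinger ν p q) := by
        rw [Real.sqrt_mul zero_le_two, Real.sqrt_mul zero_le_two]
        ring

lemma dG_le_sqrt_mul_sqrt_sqHellinger [IsFiniteMeasure μ₁] [IsFiniteMeasure μ₂] {G : α → ℝ}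
    (hG : ∀ x, 0 ≤ G x) (h₁ : IsRealDensity μ₁ ν p) (h₂ : IsRealDensity μ₂ ν q)
    (hG₁ : MemLp G 2 μ₁) (hG₂ : MemLp G 2 μ₂) :
    dG G μ₁ μ₂ ≤
      √((∫ x, G x ^ 2 ∂μ₁) + ∫ x, G x ^ 2 ∂μ₂) * √(2 * sqHellinger ν p q) := by
  have : Nonempty {f : α → ℝ // Measurable f ∧ ∀ x, |f x| ≤ G x} :=
    ⟨0, measurable_zero, by simpa using hG⟩
  refine ciSup_le fun ⟨f, hf, hfG⟩ => ?_
  have hle (x : α) : ‖f x‖ ≤ ‖G x‖ := (hfG x).trans (le_abs_self _)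
  have hf₁ : MemLp f 2 μ₁ := hG₁.mono hf.aestronglyMeasurable (.of_forall hle)
  have hf₂ : MemLp f 2 μ₂ := hG₂.mono hf.aestronglyMeasurable (.of_forall hle)
  refine (abs_integral_sub_integral_le h₁ h₂ hf₁ hf₂).trans ?_
  gcongr ?_ * _
  refine Real.sqrt_le_sqrt (add_le_add ?_ ?_)
  · exact integral_mono hf₁.integrable_sq hG₁.integrable_sq fun x => sq_le_sq.2 (hle x)
  · exact integral_mono hf₂.integrable_sq hG₂.integrable_sq fun x => sq_le_sq.2 (hle x)

lemma sq_sqrt_sub_sqrt_le_add {a b : ℝ} (ha : 0 ≤ a) (hb : 0 ≤ b) : (√a - √b) ^ 2 ≤ a + b := by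
  have := mul_nonneg (Real.sqrt_nonneg a) (Real.sqrt_nonneg b)
  linarith [sub_sq (√a) (√b), Real.sq_sqrt ha, Real.sq_sqrt hb]

lemma sq_sqrt_sub_sqrt_le_sub_add_mul_log {a b : ℝ} (ha : 0 ≤ a) (hb : 0 < b) :
    (√a - √b) ^ 2 ≤ b - a + a * (Real.log a - Real.log b) := by
  rcases ha.eq_or_lt with rfl | ha
  · simp [Real.sq_sqrt hb.le]
  have hlog : Real.log b / 2 - Real.log a / 2 ≤ √b / √a - 1 := by
    have := Real.log_le_sub_one_of_pos (div_pos (Real.sqrt_pos.2 hb) (Real.sqrt_pos.2 ha))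
    rwa [Real.log_div (Real.sqrt_pos.2 hb).ne' (Real.sqrt_pos.2 ha).ne', Real.log_sqrt hb.le,
      Real.log_sqrt ha.le] at this
  have hmul : a * (√b / √a) = √a * √b := by
    rw [mul_div_left_comm, Real.div_sqrt, mul_comm]
  nlinarith [mul_le_mul_of_nonneg_left hlog ha.le, Real.sq_sqrt ha.le, Real.sq_sqrt hb.le]

lemma sqHellinger_le_measureReal_add [IsFiniteMeasure μ₁] [IsFiniteMeasure μ₂]
    (h₁ : IsRealDensity μ₁ ν p) (h₂ : IsRealDensity μ₂ ν q) :
    sqHellinger ν p q ≤ μ₁.real Set.univ + μ₂.real Set.univ := by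
  rw [← h₁.integral_eq_measureReal_univ, ← h₂.integral_eq_measureReal_univ,
    ← integral_add h₁.integrable h₂.integrable]
  exact integral_mono_of_nonneg (.of_forall fun _ => sq_nonneg _)
    (h₁.integrable.add h₂.integrable)
    (.of_forall fun x => sq_sqrt_sub_sqrt_le_add (h₁.nonneg x) (h₂.nonneg x))

lemma sqHellinger_le_relEntropy [IsProbabilityMeasure μ₁] [IsProbabilityMeasure μ₂]
    (h₁ : IsRealDensity μ₁ ν p) (h₂ : IsRealDensity μ₂ ν q) (hq : ∀ x, 0 < q x)
    (hlog : Integrable (fun x => Real.log (p x) - Real.log (q x)) μ₁) :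
    sqHellinger ν p q ≤ relEntropy ν p q := by
  have hsub : Integrable (fun x => q x - p x) ν := h₂.integrable.sub h₁.integrable
  have hplog := h₁.integrable_iff.1 hlog
  calc sqHellinger ν p q
      ≤ ∫ x, (q x - p x + p x * (Real.log (p x) - Real.log (q x))) ∂ν :=
        integral_mono_of_nonneg (.of_forall fun _ => sq_nonneg _) (hsub.add hplog)
          (.of_forall fun x => sq_sqrt_sub_sqrt_le_sub_add_mul_log (h₁.nonneg x) (hq x))
    _ = relEntropy ν p q := by
        rw [integral_add hsub hplog, integral_sub h₂.integrable h₁.integrable,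
          h₁.integral_eq_measureReal_univ, h₂.integral_eq_measureReal_univ, relEntropy]
        simp

end WeightedTotalVariation

section SecondMoments

variable {n : ℕ} {μ : Measure (Vec n)}

lemma memLp_sub_const_apply [IsFiniteMeasure μ] {p : ℝ≥0∞} (hμ : MemLp id p μ) (a : Vec n)
    (i : Fin n) : MemLp (fun x => (x - a) i) p μ :=
  ((ContinuousLinearMap.proj (R := ℝ) (φ := fun _ : Fin n => ℝ) i).comp_memLp' hμ).sub
    (memLp_const (a i))

lemma integral_sub_const_mul_sub_const [IsProbabilityMeasure μ] (hμ : MemLp id 2 μ) (a : Vec n)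
    (i j : Fin n) :
    ∫ x, (x - a) i * (x - a) j ∂μ = cov μ i j + (mean μ - a) i * (mean μ - a) j := by
  have hint (k : Fin n) : Integrable (fun x : Vec n => x k) μ := by
    simpa using (memLp_sub_const_apply hμ 0 k).integrable one_le_two
  have hmean (k : Fin n) : ∫ x, (x - a) k ∂μ = (mean μ - a) k := by
    simp [integral_sub (hint k) (integrable_const _), mean]
  have hcov : cov[fun x : Vec n => (x - a) i, fun x => (x - a) j; μ] = cov μ i j := by
    simp only [Pi.sub_apply]
    rw [covariance_sub_const_left (hint i), covariance_sub_const_right (hint j)]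
    rfl
  rw [← hcov, covariance_eq_sub (memLp_sub_const_apply hμ a i) (memLp_sub_const_apply hμ a j),
    hmean, hmean]
  simp

lemma dotProduct_mulVec_eq_sum {ι R : Type*} [Fintype ι] [CommSemiring R] (Q : Matrix ι ι R)
    (x : ι → R) : x ⬝ᵥ (Q *ᵥ x) = ∑ i, ∑ j, Q i j * (x i * x j) := by
  simp only [mulVec, dotProduct, Finset.mul_sum]
  exact Finset.sum_congr rfl fun i _ => Finset.sum_congr rfl fun j _ => by ring

lemma integrable_sub_const_quadForm [IsFiniteMeasure μ] (hμ : MemLp id 2 μ) (a : Vec n)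
    (Q : Matrix (Fin n) (Fin n) ℝ) : Integrable (fun x => (x - a) ⬝ᵥ (Q *ᵥ (x - a))) μ := by
  simp_rw [dotProduct_mulVec_eq_sum]
  exact integrable_finsetSum _ fun i _ => integrable_finsetSum _ fun j _ =>
    ((memLp_sub_const_apply hμ a i).integrable_mul (memLp_sub_const_apply hμ a j)).const_mul _

lemma integral_sub_const_quadForm [IsProbabilityMeasure μ] (hμ : MemLp id 2 μ) (a : Vec n)
    (Q : Matrix (Fin n) (Fin n) ℝ) :
    ∫ x, (x - a) ⬝ᵥ (Q *ᵥ (x - a)) ∂μ =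
      trace (Q * cov μ) + (mean μ - a) ⬝ᵥ (Q *ᵥ (mean μ - a)) := by
  have hint (i j : Fin n) : Integrable (fun x => Q i j * ((x - a) i * (x - a) j)) μ :=
    ((memLp_sub_const_apply hμ a i).integrable_mul (memLp_sub_const_apply hμ a j)).const_mul _
  have hsymm (i j : Fin n) : cov μ j i = cov μ i j := by simp only [cov, of_apply, mul_comm]
  simp_rw [dotProduct_mulVec_eq_sum]
  rw [integral_finsetSum _ fun i _ => integrable_finsetSum _ fun j _ => hint i j]
  simp_rw [integral_finsetSum _ fun j _ => hint _ j, integral_const_mul,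
    integral_sub_const_mul_sub_const hμ, mul_add, Finset.sum_add_distrib]
  simp [trace, mul_apply, hsymm]

lemma memLp_gw [IsFiniteMeasure μ] {p q : ℝ≥0∞} [ENNReal.HolderTriple q q p]
    (hμ : MemLp id q μ) : MemLp gw p μ := by
  have hsq (i : Fin n) : MemLp (fun x : Vec n => x i ^ 2) p μ := by
    have h : MemLp (fun x : Vec n => x i) q μ := by simpa using memLp_sub_const_apply hμ 0 i
    simpa only [sq] using MemLp.mul' h h
  have hsum : MemLp (fun x : Vec n => ∑ i, x i ^ 2) p μ := memLp_finsetSum _ fun i _ => hsq i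
  exact (memLp_const (1 : ℝ)).add hsum

lemma gw_nonneg (x : Vec n) : 0 ≤ gw x := by
  unfold gw
  positivity

end SecondMoments

section GaussianMeasure

lemma map_withDensity_comp {α β : Type*} [MeasurableSpace α] [MeasurableSpace β] (ν : Measure α)
    {T : α → β} (hT : Measurable T) {ρ : β → ℝ≥0∞} (hρ : Measurable ρ) :
    (ν.withDensity (ρ ∘ T)).map T = (ν.map T).withDensity ρ := by
  ext s hs
  rw [Measure.map_apply hT hs, withDensity_apply _ (hT hs), withDensity_apply _ hs,
    setLIntegral_map hs hρ hT]
  rfl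

lemma map_const_add_mulVec_volume {ι : Type*} [Fintype ι] [DecidableEq ι] (a : ι → ℝ)
    {R : Matrix ι ι ℝ} (hR : R.det ≠ 0) :
    (volume : Measure (ι → ℝ)).map (fun x => a + R *ᵥ x) =
      ENNReal.ofReal |R.det⁻¹| • volume := by
  have hlin : Measurable (toLin' R) := (LinearMap.continuous_on_pi _).measurable
  have hcomp : (fun x => a + R *ᵥ x) = (fun x => a + x) ∘ toLin' R := by
    ext; simp
  rw [hcomp, ← Measure.map_map (by fun_prop) hlin,
    Real.map_matrix_volume_pi_eq_smul_volume_pi hR, Measure.map_smul, map_add_left_eq_self]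

variable {n : ℕ} {S : Matrix (Fin n) (Fin n) ℝ}

lemma measurable_gaussDensity (m : Vec n) (S : Matrix (Fin n) (Fin n) ℝ) :
    Measurable (gaussDensity m S) := by
  unfold gaussDensity
  exact Continuous.measurable (by fun_prop)

lemma isRealDensity_gauss (m : Vec n) (S : Matrix (Fin n) (Fin n) ℝ) :
    IsRealDensity (gauss m S) volume (gaussDensity m S) where
  measurable := measurable_gaussDensity m S
  nonneg x := by
    unfold gaussDensity
    positivity
  eq_withDensity := rfl

lemma gaussDensity_pos (m : Vec n) (hS : 0 < S.det) (x : Vec n) : 0 < gaussDensity m S x := by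
  unfold gaussDensity
  positivity

lemma gaussDensity_add_mulVec (a m : Vec n) (S : Matrix (Fin n) (Fin n) ℝ)
    {R : Matrix (Fin n) (Fin n) ℝ} (hR : R.det ≠ 0) (x : Vec n) :
    gaussDensity (a + R *ᵥ m) (R * S * Rᵀ) (a + R *ᵥ x) = |R.det|⁻¹ * gaussDensity m S x := by
  have hquad : (R *ᵥ (x - m)) ⬝ᵥ ((R * S * Rᵀ)⁻¹ *ᵥ (R *ᵥ (x - m))) =
      (x - m) ⬝ᵥ (S⁻¹ *ᵥ (x - m)) := by
    rw [Matrix.mul_inv_rev, Matrix.mul_inv_rev, mulVec_mulVec, Matrix.mul_assoc, Matrix.mul_assoc,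
      nonsing_inv_mul _ hR.isUnit, Matrix.mul_one, ← transpose_nonsing_inv, ← mulVec_mulVec,
      mulVec_transpose, dotProduct_comm, ← dotProduct_mulVec, mulVec_mulVec,
      nonsing_inv_mul _ hR.isUnit, one_mulVec, dotProduct_comm]
  rw [gaussDensity, gaussDensity, add_sub_add_left_eq_sub, ← mulVec_sub, hquad, det_mul, det_mul,
    det_transpose, show (2 * Real.pi) ^ n * (R.det * S.det * R.det) =
      R.det ^ 2 * ((2 * Real.pi) ^ n * S.det) by ring, Real.sqrt_mul (sq_nonneg _),
    Real.sqrt_sq_eq_abs, mul_inv, mul_assoc]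

lemma map_gauss_const_add_mulVec (a m : Vec n) (S : Matrix (Fin n) (Fin n) ℝ)
    {R : Matrix (Fin n) (Fin n) ℝ} (hR : R.det ≠ 0) :
    (gauss m S).map (fun x => a + R *ᵥ x) = gauss (a + R *ᵥ m) (R * S * Rᵀ) := by
  have hT : Measurable fun x : Vec n => a + R *ᵥ x := Continuous.measurable (by fun_prop)
  let ρ (y : Vec n) : ℝ≥0∞ :=
    ENNReal.ofReal (|R.det| * gaussDensity (a + R *ᵥ m) (R * S * Rᵀ) y)
  have hρ : Measurable ρ := ((measurable_gaussDensity _ _).const_mul _).ennreal_ofReal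
  have hpull : gauss m S = volume.withDensity (ρ ∘ fun x => a + R *ᵥ x) := by
    refine withDensity_congr_ae (.of_forall fun x => ?_)
    simp only [ρ, Function.comp_apply]
    rw [gaussDensity_add_mulVec a m S hR, mul_inv_cancel_left₀ (abs_ne_zero.2 hR)]
  rw [hpull, map_withDensity_comp volume hT hρ, map_const_add_mulVec_volume a hR,
    withDensity_smul_measure, ← withDensity_smul _ hρ]
  refine withDensity_congr_ae (.of_forall fun x => ?_)
  simp only [ρ, Pi.smul_apply, smul_eq_mul]
  rw [← ENNReal.ofReal_mul (abs_nonneg _), abs_inv, inv_mul_cancel_left₀ (abs_ne_zero.2 hR)]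

lemma prod_gaussianPDFReal_eq_gaussDensity (x : Vec n) :
    ∏ i, gaussianPDFReal 0 1 (x i) = gaussDensity 0 1 x := by
  simp only [gaussianPDFReal, gaussDensity, Finset.prod_mul_distrib, ← Real.exp_sum]
  congr 1
  · have hsqrt : √((2 * Real.pi) ^ n) = √(2 * Real.pi) ^ n := by
      rw [Real.sqrt_eq_iff_mul_self_eq (by positivity) (by positivity), ← mul_pow,
        Real.mul_self_sqrt Real.two_pi_pos.le]
    simp [hsqrt, ← inv_pow]
  · simp [dotProduct, Finset.mul_sum, sq, div_eq_inv_mul]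

lemma pi_gaussianReal_eq_gauss (n : ℕ) :
    Measure.pi (fun _ : Fin n => gaussianReal 0 1) = gauss 0 1 := by
  refine Measure.pi_eq fun s hs => ?_
  have hnonneg (x : Vec n) : 0 ≤ ∏ i, gaussianPDFReal 0 1 (x i) :=
    Finset.prod_nonneg fun i _ => gaussianPDFReal_nonneg _ _ _
  simp only [gauss, ← prod_gaussianPDFReal_eq_gaussDensity]
  rw [withDensity_apply _ (MeasurableSet.univ_pi hs), volume_pi, Measure.restrict_pi_pi,
    ← ofReal_integral_eq_lintegral_ofReal
      (Integrable.fintype_prod fun i => (integrable_gaussianPDFReal 0 1).restrict)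
      (.of_forall hnonneg),
    integral_fintype_prod_eq_prod, ENNReal.ofReal_prod_of_nonneg fun i _ =>
      integral_nonneg fun x => gaussianPDFReal_nonneg _ _ _]
  simp only [gaussianReal_apply_eq_integral _ one_ne_zero]

open scoped MatrixOrder in
lemma gauss_eq_map_multivariateGaussian (m : Vec n) (hS : S.PosDef) :
    gauss m S = (multivariateGaussian (WithLp.toLp 2 m) S).map WithLp.ofLp := by
  set R := CFC.sqrt S
  have hRR : R * R = S := CFC.sqrt_mul_sqrt_self S hS.posSemidef.nonneg
  have hRT : Rᵀ = R := by
    rw [← conjTranspose_eq_transpose_of_trivial]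
    exact (CFC.sqrt_nonneg S).isSelfAdjoint.star_eq
  have hdet : R.det ≠ 0 := fun h => hS.det_pos.ne' (by rw [← hRR, det_mul, h, zero_mul])
  calc gauss m S = (gauss 0 1).map (fun x => m + R *ᵥ x) := by
        rw [map_gauss_const_add_mulVec m 0 1 hdet, mulVec_zero, add_zero, mul_one, hRT, hRR]
    _ = (multivariateGaussian (WithLp.toLp 2 m) S).map WithLp.ofLp := by
        rw [multivariateGaussian, ← map_pi_eq_stdGaussian, pi_gaussianReal_eq_gauss,
          Measure.map_map (by fun_prop) (by fun_prop), Measure.map_map (by fun_prop) (by fun_prop)]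
        rfl

lemma isGaussian_gauss (m : Vec n) (hS : S.PosDef) : IsGaussian (gauss m S) := by
  have : gauss m S = (multivariateGaussian (WithLp.toLp 2 m) S).map
      (EuclideanSpace.equiv (Fin n) ℝ) := gauss_eq_map_multivariateGaussian m hS
  rw [this]
  infer_instance

lemma mean_gauss (m : Vec n) (hS : S.PosDef) : mean (gauss m S) = m := by
  ext i
  rw [mean, gauss_eq_map_multivariateGaussian m hS, integral_map (f := fun v : Vec n => v i)
    (by fun_prop) (measurable_pi_apply i).aestronglyMeasurable]
  have := (EuclideanSpace.proj i : EuclideanSpace ℝ (Fin n) →L[ℝ] ℝ).integral_comp_id_comm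
    (IsGaussian.integrable_id (μ := multivariateGaussian (WithLp.toLp 2 m) S))
  simpa using this

lemma cov_gauss (m : Vec n) (hS : S.PosDef) : cov (gauss m S) = S := by
  ext i j
  change cov[fun v : Vec n => v i, fun v => v j; gauss m S] = S i j
  rw [gauss_eq_map_multivariateGaussian m hS, covariance_map
    (measurable_pi_apply i).aestronglyMeasurable (measurable_pi_apply j).aestronglyMeasurable
    (by fun_prop)]
  exact covariance_eval_multivariateGaussian hS.posSemidef i j

lemma memLp_gw_gauss (m : Vec n) (hS : S.PosDef) {p : ℝ≥0∞}
    (hp : p ≠ ∞) : MemLp gw p (gauss m S) := by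
  have := isGaussian_gauss m hS
  have : ENNReal.HolderTriple (2 * p) (2 * p) p := by
    constructor
    rw [ENNReal.mul_inv (by simp) (by simp), ← add_mul, ENNReal.inv_two_add_inv_two, one_mul]
  exact memLp_gw (IsGaussian.memLp_id _ (2 * p) (ENNReal.mul_ne_top (by simp) hp))

end GaussianMeasure

section GaussianRelativeEntropy

variable {n : ℕ} {S S₁ S₂ : Matrix (Fin n) (Fin n) ℝ}

lemma log_gaussDensity (m : Vec n) (hS : 0 < S.det) (x : Vec n) :
    Real.log (gaussDensity m S x) =
      -(1 / 2) * (n * Real.log (2 * Real.pi) + Real.log S.det + (x - m) ⬝ᵥ (S⁻¹ *ᵥ (x - m))) := by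
  rw [gaussDensity, Real.log_mul (by positivity) (Real.exp_ne_zero _), Real.log_exp, Real.log_inv,
    Real.log_sqrt (by positivity), Real.log_mul (by positivity) hS.ne', Real.log_pow]
  ring

lemma wnorm_sq (hS : S.PosSemidef) (x : Vec n) : wnorm S x ^ 2 = x ⬝ᵥ (S⁻¹ *ᵥ x) :=
  Real.sq_sqrt (by simpa using hS.inv.dotProduct_mulVec_nonneg x)

lemma integrable_log_gaussDensity {μ : Measure (Vec n)} [IsFiniteMeasure μ] (hμ : MemLp id 2 μ)
    (m : Vec n) (hS : 0 < S.det) : Integrable (fun x => Real.log (gaussDensity m S x)) μ := by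
  simp_rw [log_gaussDensity m hS]
  exact ((integrable_const _).add (integrable_sub_const_quadForm hμ m S⁻¹)).const_mul _

lemma integral_log_gaussDensity {μ : Measure (Vec n)} [IsProbabilityMeasure μ]
    (hμ : MemLp id 2 μ) (m : Vec n) (hS : S.PosDef) :
    ∫ x, Real.log (gaussDensity m S x) ∂μ =
      -(1 / 2) * (n * Real.log (2 * Real.pi) + Real.log S.det + trace (S⁻¹ * cov μ) +
        wnorm S (mean μ - m) ^ 2) := by
  simp_rw [log_gaussDensity m hS.det_pos]
  rw [integral_const_mul, integral_add (integrable_const _) (integrable_sub_const_quadForm hμ m _),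
    integral_sub_const_quadForm hμ, wnorm_sq hS.posSemidef, integral_const]
  simp [add_assoc]

lemma relEntropy_gaussDensity (m₁ m₂ : Vec n) (hS₁ : S₁.PosDef) (hS₂ : S₂.PosDef) :
    relEntropy volume (gaussDensity m₁ S₁) (gaussDensity m₂ S₂) =
      1 / 2 * (trace (S₂⁻¹ * S₁) - n - (Real.log S₁.det - Real.log S₂.det) +
        wnorm S₂ (m₁ - m₂) ^ 2) := by
  have := isGaussian_gauss m₁ hS₁
  have hμ : MemLp id 2 (gauss m₁ S₁) := IsGaussian.memLp_two_id
  rw [relEntropy, ← (isRealDensity_gauss m₁ S₁).integral_eq fun x =>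
      Real.log (gaussDensity m₁ S₁ x) - Real.log (gaussDensity m₂ S₂ x),
    integral_sub (integrable_log_gaussDensity hμ m₁ hS₁.det_pos)
      (integrable_log_gaussDensity hμ m₂ hS₂.det_pos),
    integral_log_gaussDensity hμ m₁ hS₁, integral_log_gaussDensity hμ m₂ hS₂,
    mean_gauss m₁ hS₁, cov_gauss m₁ hS₁, nonsing_inv_mul _ hS₁.det_pos.ne'.isUnit, trace_one,
    sub_self, wnorm_sq hS₁.posSemidef 0, mulVec_zero, dotProduct_zero, Fintype.card_fin]
  ring

end GaussianRelativeEntropy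

section LogDet

variable {ι : Type*} [Fintype ι]

lemma trace_mul_self_le_frobNorm_sq (B : Matrix ι ι ℝ) : trace (B * B) ≤ frobNorm B ^ 2 := by
  have hswap : ∑ i, ∑ j, B j i ^ 2 = ∑ i, ∑ j, B i j ^ 2 := Finset.sum_comm
  have h : ∑ i, ∑ j, 2 * (B i j * B j i) ≤ ∑ i, ∑ j, (B i j ^ 2 + B j i ^ 2) := by
    gcongr with i _ j _
    linarith [two_mul_le_add_sq (B i j) (B j i)]
  rw [frobNorm, Real.sq_sqrt (by positivity)]
  simp only [Finset.sum_add_distrib, ← Finset.mul_sum, hswap] at h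
  simp only [trace, diag_apply, mul_apply]
  linarith

lemma sub_one_sub_log_le_sq_div {x : ℝ} (hx : 0 < x) : x - 1 - Real.log x ≤ (x - 1) ^ 2 / x := by
  have hsplit : (x - 1) ^ 2 / x = x - 1 - (1 - x⁻¹) := by
    field_simp
  linarith [Real.one_sub_inv_le_log_of_pos hx]

variable [DecidableEq ι]

lemma trace_cfc_eq_sum_eigenvalues {𝕜 : Type*} [RCLike 𝕜] {C : Matrix ι ι 𝕜} (hC : C.IsHermitian)
    (f : ℝ → ℝ) : trace (cfc f C) = ∑ i, (f (hC.eigenvalues i) : 𝕜) := by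
  rw [hC.cfc_eq, IsHermitian.cfc, Unitary.conjStarAlgAut_apply, trace_mul_comm, ← mul_assoc]
  simp

open scoped MatrixOrder ComplexOrder in
lemma exists_posDef_conj_inv_mul {𝕜 : Type*} [RCLike 𝕜] {S₁ S₂ : Matrix ι ι 𝕜} (hS₁ : S₁.PosDef)
    (hS₂ : S₂.PosDef) :
    ∃ (P : (Matrix ι ι 𝕜)ˣ) (C : Matrix ι ι 𝕜), C.PosDef ∧
      S₂⁻¹ * S₁ = (P : Matrix ι ι 𝕜) * C * (P⁻¹ : (Matrix ι ι 𝕜)ˣ) := by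
  obtain ⟨R, hR⟩ : IsUnit (CFC.sqrt S₂) :=
    (CFC.isUnit_sqrt_iff_isStrictlyPositive).2 hS₂.isStrictlyPositive
  have hRR : (R : Matrix ι ι 𝕜) * R = S₂ := by
    rw [hR]
    exact CFC.sqrt_mul_sqrt_self S₂ hS₂.posSemidef.nonneg
  have hRH : (R : Matrix ι ι 𝕜)ᴴ = R := by
    rw [hR]
    exact (CFC.sqrt_nonneg S₂).isSelfAdjoint.star_eq
  refine ⟨R⁻¹, (R⁻¹ : (Matrix ι ι 𝕜)ˣ) * S₁ * (R⁻¹ : (Matrix ι ι 𝕜)ˣ), ?_, ?_⟩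
  · have hposDef := hS₁.mul_mul_conjTranspose_same (vecMul_injective_of_isUnit (R⁻¹).isUnit)
    simpa only [coe_units_inv, conjTranspose_nonsing_inv, hRH] using hposDef
  · rw [← hRR, Matrix.mul_inv_rev, inv_inv]
    simp [Matrix.mul_assoc]

lemma trace_sub_card_sub_log_det_le {C : Matrix ι ι ℝ} (hC : C.IsHermitian) {r : ℝ} (hr₀ : 0 ≤ r)
    (hr₁ : r < 1) (hCr : trace ((C - 1) * (C - 1)) ≤ r ^ 2) :
    trace C - Fintype.card ι - Real.log C.det ≤ r ^ 2 / (1 - r) := by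
  set lam := hC.eigenvalues
  have hsumsq : ∑ i, (lam i - 1) ^ 2 ≤ r ^ 2 := by
    have hcfc : cfc (fun x : ℝ => (x - 1) ^ 2) C = (C - 1) * (C - 1) := by
      have hC' : IsSelfAdjoint C := hC
      rw [cfc_pow (fun x : ℝ => x - 1) 2 C, cfc_sub (fun x : ℝ => x) (fun _ => 1) C, cfc_id' ℝ C,
        cfc_const_one ℝ C, sq]
    rw [← hcfc, trace_cfc_eq_sum_eigenvalues hC] at hCr
    exact hCr
  have hlow (i : ι) : 1 - r ≤ lam i := by
    have hsq : (lam i - 1) ^ 2 ≤ r ^ 2 := le_trans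
      (Finset.single_le_sum (f := fun i => (lam i - 1) ^ 2) (fun i _ => sq_nonneg _)
        (Finset.mem_univ i)) hsumsq
    linarith [(abs_le_of_sq_le_sq' hsq hr₀).1]
  have hpos (i : ι) : 0 < lam i := (sub_pos.2 hr₁).trans_le (hlow i)
  calc trace C - Fintype.card ι - Real.log C.det
      = ∑ i, (lam i - 1 - Real.log (lam i)) := by
        rw [hC.det_eq_prod_eigenvalues, hC.trace_eq_sum_eigenvalues]
        simp only [RCLike.ofReal_real_eq_id, id_eq]
        rw [Real.log_prod fun i _ => (hpos i).ne']
        simp [Finset.sum_sub_distrib, lam]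
    _ ≤ ∑ i, (lam i - 1) ^ 2 / (1 - r) := by
        gcongr with i
        refine (sub_one_sub_log_le_sq_div (hpos i)).trans ?_
        have := sub_pos.2 hr₁
        gcongr
        exact hlow i
    _ ≤ r ^ 2 / (1 - r) := by
        rw [← Finset.sum_div]
        have := sub_pos.2 hr₁
        gcongr

lemma trace_inv_mul_sub_card_sub_log_det_le {S₁ S₂ : Matrix ι ι ℝ} (hS₁ : S₁.PosDef)
    (hS₂ : S₂.PosDef) (hF : frobNorm (S₂⁻¹ * S₁ - 1) < 1) :
    trace (S₂⁻¹ * S₁) - Fintype.card ι - (Real.log S₁.det - Real.log S₂.det) ≤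
      frobNorm (S₂⁻¹ * S₁ - 1) ^ 2 / (1 - frobNorm (S₂⁻¹ * S₁ - 1)) := by
  obtain ⟨P, C, hC, hconj⟩ := exists_posDef_conj_inv_mul hS₁ hS₂
  have htrace : trace (S₂⁻¹ * S₁) = trace C := by rw [hconj, trace_units_conj]
  have htrace_sq : trace ((C - 1) * (C - 1)) = trace ((S₂⁻¹ * S₁ - 1) * (S₂⁻¹ * S₁ - 1)) := by
    have hsub : S₂⁻¹ * S₁ - 1 = (P : Matrix ι ι ℝ) * (C - 1) * (P⁻¹ : (Matrix ι ι ℝ)ˣ) := by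
      rw [hconj, mul_sub, sub_mul, mul_one, Units.mul_inv]
    have hsq : (S₂⁻¹ * S₁ - 1) * (S₂⁻¹ * S₁ - 1) =
        (P : Matrix ι ι ℝ) * ((C - 1) * (C - 1)) * (P⁻¹ : (Matrix ι ι ℝ)ˣ) := by
      rw [hsub]
      simp only [mul_assoc, Units.inv_mul_cancel_left]
    rw [hsq, trace_units_conj]
  have hlogdet : Real.log S₁.det - Real.log S₂.det = Real.log C.det := by
    rw [← det_units_conj P C, ← hconj, det_mul, det_nonsing_inv, Ring.inverse_eq_inv,
      Real.log_mul (inv_ne_zero hS₂.det_pos.ne') hS₁.det_pos.ne', Real.log_inv]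
    ring
  rw [htrace, hlogdet]
  exact trace_sub_card_sub_log_det_le hC.isHermitian (Real.sqrt_nonneg _) hF
    (htrace_sq.trans_le (trace_mul_self_le_frobNorm_sq _))

end LogDet

section GaussianDistance

variable {n : ℕ} {S₁ S₂ : Matrix (Fin n) (Fin n) ℝ}

lemma sqHellinger_gaussDensity_le (m₁ m₂ : Vec n) (hS₁ : S₁.PosDef) (hS₂ : S₂.PosDef) :
    sqHellinger volume (gaussDensity m₁ S₁) (gaussDensity m₂ S₂) ≤
      (3 * frobNorm (S₂⁻¹ * S₁ - 1) + wnorm S₂ (m₁ - m₂)) ^ 2 / 2 := by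
  have := isGaussian_gauss m₁ hS₁
  have := isGaussian_gauss m₂ hS₂
  have h₁ := isRealDensity_gauss m₁ S₁
  have h₂ := isRealDensity_gauss m₂ S₂
  have hF : 0 ≤ frobNorm (S₂⁻¹ * S₁ - 1) := Real.sqrt_nonneg _
  have hw : 0 ≤ wnorm S₂ (m₁ - m₂) := Real.sqrt_nonneg _
  rcases le_total 2 (3 * frobNorm (S₂⁻¹ * S₁ - 1) + wnorm S₂ (m₁ - m₂)) with hfar | hnear
  · have htrivial := sqHellinger_le_measureReal_add h₁ h₂
    simp only [probReal_univ] at htrivial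
    nlinarith
  · have hlogdet := trace_inv_mul_sub_card_sub_log_det_le hS₁ hS₂ (by linarith)
    rw [Fintype.card_fin] at hlogdet
    have hμ : MemLp id 2 (gauss m₁ S₁) := IsGaussian.memLp_two_id
    have hentropy := sqHellinger_le_relEntropy h₁ h₂ (gaussDensity_pos m₂ hS₂.det_pos)
      ((integrable_log_gaussDensity hμ m₁ hS₁.det_pos).sub
        (integrable_log_gaussDensity hμ m₂ hS₂.det_pos))
    rw [relEntropy_gaussDensity m₁ m₂ hS₁ hS₂] at hentropy
    set F := frobNorm (S₂⁻¹ * S₁ - 1)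
    have hdiv : F ^ 2 / (1 - F) ≤ 3 * F ^ 2 := by
      rw [div_le_iff₀ (by linarith)]
      nlinarith
    nlinarith [mul_nonneg hF hw]

theorem dG_gaussians_general (m₁ m₂ : Vec n) (hS₁ : S₁.PosDef) (hS₂ : S₂.PosDef)
    {G : Vec n → ℝ} (hG : ∀ v, 0 ≤ G v) (hG₁ : MemLp G 2 (gauss m₁ S₁))
    (hG₂ : MemLp G 2 (gauss m₂ S₂)) :
    dG G (gauss m₁ S₁) (gauss m₂ S₂) ≤
      √((∫ v, G v ^ 2 ∂(gauss m₁ S₁)) + ∫ v, G v ^ 2 ∂(gauss m₂ S₂)) *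
        (3 * frobNorm (S₂⁻¹ * S₁ - 1) + wnorm S₂ (m₁ - m₂)) := by
  have := isGaussian_gauss m₁ hS₁
  have := isGaussian_gauss m₂ hS₂
  refine (dG_le_sqrt_mul_sqrt_sqHellinger hG (isRealDensity_gauss m₁ S₁)
    (isRealDensity_gauss m₂ S₂) hG₁ hG₂).trans ?_
  gcongr
  refine Real.sqrt_le_iff.2 ⟨add_nonneg (mul_nonneg three_pos.le (Real.sqrt_nonneg _))
    (Real.sqrt_nonneg _), ?_⟩
  linarith [sqHellinger_gaussDensity_le m₁ m₂ hS₁ hS₂]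

end GaussianDistance

/-- **Weighted TV distance between two Gaussians** (Lemma A.10). -/
theorem dG_gaussians
    (n : ℕ) (m₁ m₂ : Vec n) (S₁ S₂ : Matrix (Fin n) (Fin n) ℝ)
    (hS₁ : S₁.PosDef) (hS₂ : S₂.PosDef) :
    dG gw (gauss m₁ S₁) (gauss m₂ S₂) ≤
      Real.sqrt ((∫ v, gw v ^ 2 ∂(gauss m₁ S₁)) + ∫ v, gw v ^ 2 ∂(gauss m₂ S₂)) *
        (3 * frobNorm (S₂⁻¹ * S₁ - 1) + wnorm S₂ (m₁ - m₂)) :=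
  dG_gaussians_general m₁ m₂ hS₁ hS₂ gw_nonneg (memLp_gw_gauss m₁ hS₁ ENNReal.ofNat_ne_top)
    (memLp_gw_gauss m₂ hS₂ ENNReal.ofNat_ne_top)

end EnKF
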